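/- Let 0 < ε < 1/2 and let T be an ε-noisy boolean decision tree on n variables of depth at most k·n. Then there exists a randomized query algorithm A (formally, a probability distribution over deterministic boolean decision trees whose leaves are labeled by leaves of T) such that: (i) for every input x ∈ {0,1}^n, the distribution of the leaf of T that A reaches on x equals the distribution on leaves of the ε-noisy computation of T on x; and (ii) for every input x, with probability at least 1 - exp(-ε^(2k)·n/16), the computation of A on x queries at most n - ε^(2k)·n/4 distinct variables, i.e., leaves at least ε^(2k)·n/4 variables unread. -/

import Mathlib

/-- A boolean decision tree on `n` variables with leaves labeled by `L`:
internal nodes are labeled by a variable index and have two children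
(child `0` and child `1`). -/
inductive NoisyTree (n : ℕ) (L : Type) : Type where
  | leaf : L → NoisyTree n L
  | node : Fin n → NoisyTree n L → NoisyTree n L → NoisyTree n L

namespace NoisyTree

/-- Depth of a tree: maximum length of a root-to-leaf path. -/
def depth {n : ℕ} {L : Type} : NoisyTree n L → ℕ
  | .leaf _ => 0
  | .node _ t0 t1 => max (depth t0) (depth t1) + 1

/-- The leaf(-label) distribution of the `ε`-noisy computation of the tree on
input `x`: at a node labeled `i`, move to the child indexed by `x i ⊕ η` where
`η` is a fresh independent Bernoulli(`ε`) bit.  `leafDist ε t x l` is the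
probability that the noisy computation reaches a leaf labeled `l`. -/
def leafDist {n : ℕ} {L : Type} [DecidableEq L] (ε : ℝ) :
    NoisyTree n L → (Fin n → Bool) → L → ℝ
  | .leaf l, _, l' => if l' = l then 1 else 0
  | .node i t0 t1, x, l' =>
      (if x i then ε else 1 - ε) * leafDist ε t0 x l' +
      (if x i then 1 - ε else ε) * leafDist ε t1 x l'

end NoisyTree

/-- A deterministic boolean decision tree on `n` variables with leaves labeled
by `L`: at a node labeled `i` the true value of `x i` is read and the
computation branches on it. -/
inductive DetTree (n : ℕ) (L : Type) : Type where
  | leaf : L → DetTree n L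
  | node : Fin n → DetTree n L → DetTree n L → DetTree n L

namespace DetTree

/-- The leaf label reached by the deterministic computation on input `x`. -/
def eval {n : ℕ} {L : Type} : DetTree n L → (Fin n → Bool) → L
  | .leaf l, _ => l
  | .node i t0 t1, x => if x i then eval t1 x else eval t0 x

/-- The set of distinct variables queried by the deterministic computation on
input `x`. -/
def queried {n : ℕ} {L : Type} : DetTree n L → (Fin n → Bool) → Finset (Fin n)
  | .leaf _, _ => ∅
  | .node i t0 t1, x => insert i (if x i then queried t1 x else queried t0 x)

end DetTree

/-!
An `ε`-noisy bit is a uniform bit with probability `2ε` and the true bit otherwise, so a simulation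
has to read a variable only in the second case. Condition on the leaf that is reached. A visit to
`i` that moved against `x i` did not read `i`, and a visit that moved along `x i` did not read it
with probability `r = ε / (1 - ε)`, independently of all other visits. A variable with `qᵢ` visits
of the latter kind thus stays unread with probability `r ^ qᵢ`, and as `∑ qᵢ` is at most the depth
`D`, by AM-GM the expected number of unread variables is at least `n r ^ (D / n)`. A Chernoff bound
follows from the Laplace transform of that number, which is estimated by induction on the tree in
the form of the mean of `∏ (1 - aⱼ)` over the unread `j`: a visit along `x i` turns `aᵢ` into
`r aᵢ`.
-/

open Convexity

section FinitelySupportedDistribution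

variable {α : Type*}

lemma exists_fin_sum_eq_iConvexComb (μ : StdSimplex ℝ α) :
    ∃ (m : ℕ) (v : Fin m → α) (w : Fin m → ℝ), (∀ j, 0 ≤ w j) ∧ ∑ j, w j = 1 ∧
      ∀ f : α → ℝ, ∑ j, w j * f (v j) = μ.iConvexComb f := by
  let e := μ.weights.support.equivFin.symm
  have hsum (f : α → ℝ) : ∑ j, μ.weights (e j) * f (e j) = μ.iConvexComb f := by
    rw [e.sum_comp fun a ↦ μ.weights a * f a,
      Finset.sum_coe_sort μ.weights.support fun a ↦ μ.weights a * f a, iConvexComb_eq_sum]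
    rfl
  refine ⟨_, fun j ↦ e j, fun j ↦ μ.weights (e j), fun j ↦ μ.weights_nonneg _, ?_, hsum⟩
  simpa only [mul_one, iConvexComb_const] using hsum fun _ ↦ 1

lemma one_sub_exp_mul_iConvexComb_le (μ : StdSimplex ℝ α) (X : α → ℝ) {t : ℝ} (ht : 0 ≤ t)
    (s : ℝ) :
    1 - Real.exp (t * s) * μ.iConvexComb (fun a ↦ Real.exp (-(t * X a))) ≤
      μ.iConvexComb fun a ↦ if s ≤ X a then 1 else 0 := by
  have hpointwise (a : α) :
      1 - Real.exp (t * s) * Real.exp (-(t * X a)) ≤ if s ≤ X a then 1 else 0 := by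
    split_ifs with h
    · exact sub_le_self _ (by positivity)
    · rw [← Real.exp_add, sub_nonpos, Real.one_le_exp_iff]
      nlinarith
  calc 1 - Real.exp (t * s) * μ.iConvexComb (fun a ↦ Real.exp (-(t * X a)))
      = μ.iConvexComb fun a ↦ 1 - Real.exp (t * s) * Real.exp (-(t * X a)) := by
        have htotal : μ.weights.sum (fun _ r ↦ r) = 1 := μ.total
        simp only [iConvexComb_eq_sum, smul_eq_mul, mul_sub, mul_one, Finsupp.sum_sub, htotal,
          Finsupp.mul_sum, mul_left_comm]
    _ ≤ μ.iConvexComb fun a ↦ if s ≤ X a then 1 else 0 := by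
        simp only [iConvexComb_eq_sum, smul_eq_mul]
        exact Finset.sum_le_sum fun a _ ↦
          mul_le_mul_of_nonneg_left (hpointwise a) (μ.weights_nonneg a)

end FinitelySupportedDistribution

section Products

variable {ι : Type*} [Fintype ι]

lemma card_mul_geom_mean_le_sum {a : ι → ℝ} (ha : ∀ i, 0 ≤ a i) :
    Fintype.card ι * (∏ i, a i) ^ (Fintype.card ι : ℝ)⁻¹ ≤ ∑ i, a i := by
  cases isEmpty_or_nonempty ι
  · simp
  · have h := Real.geom_mean_le_arith_mean Finset.univ 1 a (by simp)
      (by simp [Fintype.card_pos]) fun i _ ↦ ha i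
    simp only [Pi.one_apply, Real.rpow_one, Finset.sum_const, Finset.card_univ, nsmul_eq_mul,
      mul_one, one_mul] at h
    rwa [le_div_iff₀' (by exact_mod_cast Fintype.card_pos)] at h

lemma prod_one_sub_le_exp_neg_of_le_prod {a : ι → ℝ} (ha₀ : ∀ i, 0 ≤ a i) (ha₁ : ∀ i, a i ≤ 1)
    {p : ℝ} (hp₀ : 0 ≤ p) (hp : p ≤ ∏ i, a i) :
    ∏ i, (1 - a i) ≤ Real.exp (-(Fintype.card ι * p ^ (Fintype.card ι : ℝ)⁻¹)) := by
  have hsum : Fintype.card ι * p ^ (Fintype.card ι : ℝ)⁻¹ ≤ ∑ i, a i :=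
    le_trans (by gcongr) (card_mul_geom_mean_le_sum ha₀)
  calc ∏ i, (1 - a i) ≤ ∏ i, Real.exp (-a i) :=
        Finset.prod_le_prod (fun i _ ↦ sub_nonneg.2 (ha₁ i))
          fun i _ ↦ Real.one_sub_le_exp_neg (a i)
    _ = Real.exp (-∑ i, a i) := by rw [← Real.exp_sum, Finset.sum_neg_distrib]
    _ ≤ _ := Real.exp_le_exp.2 (neg_le_neg hsum)

variable [DecidableEq ι]

lemma prod_update_mul {M : Type*} [CommMonoid M] (a : ι → M) (i : ι) (r : M) :
    ∏ j, Function.update a i (r * a i) j = r * ∏ j, a j := by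
  rw [Finset.prod_update_of_mem (Finset.mem_univ i), Finset.sdiff_singleton_eq_erase, mul_assoc,
    Finset.mul_prod_erase _ a (Finset.mem_univ i)]

lemma prod_compl_one_sub_update {R : Type*} [CommRing R] {ε r : R}
    (hr : (1 - ε) * r = ε) (a : ι → R) (Q : Finset ι) (i : ι) :
    ε * ∏ j ∈ Qᶜ, (1 - a j) + (1 - 2 * ε) * ∏ j ∈ (insert i Q)ᶜ, (1 - a j) =
      (1 - ε) * ∏ j ∈ Qᶜ, (1 - Function.update a i (r * a i) j) := by
  have hupdate : (fun j ↦ 1 - Function.update a i (r * a i) j) =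
      Function.update (fun j ↦ 1 - a j) i (1 - r * a i) :=
    Function.comp_update (1 - ·) a i (r * a i)
  rw [hupdate]
  by_cases hi : i ∈ Q
  · rw [Finset.insert_eq_of_mem hi, Finset.prod_update_of_notMem (Finset.notMem_compl.2 hi)]
    ring
  · have hi' : i ∈ Qᶜ := Finset.mem_compl.2 hi
    rw [Finset.prod_update_of_mem hi', Finset.sdiff_singleton_eq_erase, Finset.compl_insert,
      ← Finset.mul_prod_erase _ _ hi']
    linear_combination (a i * ∏ j ∈ Qᶜ.erase i, (1 - a j)) * hr

end Products

namespace NoisyTree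

variable {n : ℕ} {L : Type} {ε : ℝ}

lemma leafDist_node [DecidableEq L] (ε : ℝ) (i : Fin n) (t₀ t₁ : NoisyTree n L)
    (x : Fin n → Bool) (l : L) :
    (node i t₀ t₁).leafDist ε x l =
      ε * (if x i then t₀ else t₁).leafDist ε x l +
        (1 - ε) * (if x i then t₁ else t₀).leafDist ε x l := by
  cases hx : x i <;> simp [leafDist, hx, add_comm]

/-- The randomized query algorithm simulating the `ε`-noisy computation of a tree. Since `ε`-noise
replaces a bit by a uniform one with probability `2ε`, the algorithm at each node moves to a uniform
child without reading anything with probability `2ε`, and reads the variable otherwise. -/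
noncomputable def simulate (hε₀ : 0 ≤ ε) (hε₁ : ε ≤ 1 / 2) :
    NoisyTree n L → StdSimplex ℝ (DetTree n L)
  | .leaf l => .single (.leaf l)
  | .node i t₀ t₁ =>
      convexCombPair (R := ℝ) (2 * ε) (1 - 2 * ε) (by linarith) (by linarith) (by ring)
        (convexCombPair (R := ℝ) (1 / 2) (1 / 2) (by norm_num) (by norm_num) (by norm_num)
          (simulate hε₀ hε₁ t₀) (simulate hε₀ hε₁ t₁))
        ((simulate hε₀ hε₁ t₀).iConvexComb fun d₀ ↦ (simulate hε₀ hε₁ t₁).map fun d₁ ↦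
          .node i d₀ d₁)

/-- The expectation of a function of the leaf reached and the set of variables queried by the
simulation of `T` on input `x`. -/
noncomputable def simulateMean (hε₀ : 0 ≤ ε) (hε₁ : ε ≤ 1 / 2) (T : NoisyTree n L)
    (x : Fin n → Bool) (f : L → Finset (Fin n) → ℝ) : ℝ :=
  (T.simulate hε₀ hε₁).iConvexComb fun d ↦ f (d.eval x) (d.queried x)

variable (hε₀ : 0 ≤ ε) (hε₁ : ε ≤ 1 / 2)

lemma simulateMean_leaf (l : L) (x : Fin n → Bool) (f : L → Finset (Fin n) → ℝ) :
    (leaf l).simulateMean hε₀ hε₁ x f = f l ∅ :=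
  iConvexComb_single _ _

lemma iConvexComb_simulate_node (i : Fin n) (t₀ t₁ : NoisyTree n L) (g : DetTree n L → ℝ) :
    ((node i t₀ t₁).simulate hε₀ hε₁).iConvexComb g =
      ε * (t₀.simulate hε₀ hε₁).iConvexComb g + ε * (t₁.simulate hε₀ hε₁).iConvexComb g +
        (1 - 2 * ε) * (t₀.simulate hε₀ hε₁).iConvexComb fun d₀ ↦
          (t₁.simulate hε₀ hε₁).iConvexComb fun d₁ ↦ g (.node i d₀ d₁) := by
  have hmean : IsAffineMap ℝ fun μ : StdSimplex ℝ (DetTree n L) ↦ μ.iConvexComb g :=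
    ⟨fun σ ↦ by rw [← iConvexComb_id σ, ← iConvexComb_assoc, iConvexComb]; rfl⟩
  rw [simulate, hmean.map_convexCombPair, hmean.map_convexCombPair, ← iConvexComb_assoc]
  simp only [iConvexComb_map, convexCombPair_eq_sum, smul_eq_mul]
  ring

lemma simulateMean_node (i : Fin n) (t₀ t₁ : NoisyTree n L) (x : Fin n → Bool)
    (f : L → Finset (Fin n) → ℝ) :
    (node i t₀ t₁).simulateMean hε₀ hε₁ x f =
      ε * (if x i then t₀ else t₁).simulateMean hε₀ hε₁ x f +
        (ε * (if x i then t₁ else t₀).simulateMean hε₀ hε₁ x f +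
          (1 - 2 * ε) * (if x i then t₁ else t₀).simulateMean hε₀ hε₁ x
            fun l Q ↦ f l (insert i Q)) := by
  rw [simulateMean, iConvexComb_simulate_node]
  cases hx : x i <;>
    simp only [simulateMean, DetTree.eval, DetTree.queried, hx, Bool.false_eq_true, if_true,
      if_false, iConvexComb_const] <;>
    ring

lemma simulateMean_ite_eq_leafDist [DecidableEq L] (T : NoisyTree n L) (x : Fin n → Bool) (l : L) :
    T.simulateMean hε₀ hε₁ x (fun l' _ ↦ if l' = l then 1 else 0) = T.leafDist ε x l := by
  induction T with
  | leaf l' => simp only [simulateMean_leaf, leafDist, eq_comm]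
  | node i t₀ t₁ ih₀ ih₁ =>
    rw [simulateMean_node, leafDist_node]
    cases x i <;> simp only [Bool.false_eq_true, if_true, if_false, ih₀, ih₁] <;> ring

lemma simulateMean_add_simulateMean_insert {r : ℝ} (hr : (1 - ε) * r = ε) (T : NoisyTree n L)
    (x : Fin n → Bool) (i : Fin n) (a : Fin n → ℝ) :
    ε * T.simulateMean hε₀ hε₁ x (fun _ Q ↦ ∏ j ∈ Qᶜ, (1 - a j)) +
        (1 - 2 * ε) * T.simulateMean hε₀ hε₁ x (fun _ Q ↦ ∏ j ∈ (insert i Q)ᶜ, (1 - a j)) =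
      (1 - ε) * T.simulateMean hε₀ hε₁ x
        fun _ Q ↦ ∏ j ∈ Qᶜ, (1 - Function.update a i (r * a i) j) := by
  simp only [simulateMean, iConvexComb_eq_sum, smul_eq_mul, Finsupp.mul_sum, ← Finsupp.sum_add]
  refine Finsupp.sum_congr fun d _ ↦ ?_
  linear_combination (T.simulate hε₀ hε₁).weights d *
    prod_compl_one_sub_update hr a (d.queried x) i

/-- Run the simulation with an independent coin of bias `a j` at every variable `j`; the mean is the
probability that no unread variable shows heads. -/
lemma simulateMean_prod_compl_le {r : ℝ} (hr₀ : 0 ≤ r) (hr₁ : r ≤ 1) (hr : (1 - ε) * r = ε)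
    (T : NoisyTree n L) (x : Fin n → Bool) {D : ℕ} (hD : T.depth ≤ D) {a : Fin n → ℝ}
    (ha₀ : ∀ j, 0 ≤ a j) (ha₁ : ∀ j, a j ≤ 1) :
    T.simulateMean hε₀ hε₁ x (fun _ Q ↦ ∏ j ∈ Qᶜ, (1 - a j)) ≤
      Real.exp (-(n * (r ^ D * ∏ j, a j) ^ (n : ℝ)⁻¹)) := by
  induction T generalizing D a with
  | leaf l =>
    have hprod : 0 ≤ ∏ j, a j := Finset.prod_nonneg fun j _ ↦ ha₀ j
    have hshrink : r ^ D * ∏ j, a j ≤ ∏ j, a j :=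
      mul_le_of_le_one_left hprod (pow_le_one₀ hr₀ hr₁)
    rw [simulateMean_leaf, Finset.compl_empty]
    simpa only [Fintype.card_fin] using
      prod_one_sub_le_exp_neg_of_le_prod ha₀ ha₁ (by positivity) hshrink
  | node i t₀ t₁ ih₀ ih₁ =>
    obtain ⟨D, rfl⟩ : ∃ D', D = D' + 1 := Nat.exists_eq_add_one.2 (Nat.zero_lt_of_lt hD)
    obtain ⟨hD₀, hD₁⟩ := max_le_iff.1 (Nat.le_of_succ_le_succ hD)
    set B := Real.exp (-(n * (r ^ (D + 1) * ∏ j, a j) ^ (n : ℝ)⁻¹)) with hB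
    have hwrong : (if x i then t₀ else t₁).simulateMean hε₀ hε₁ x
        (fun _ Q ↦ ∏ j ∈ Qᶜ, (1 - a j)) ≤ B := by
      split_ifs
      exacts [ih₀ (hD₀.trans D.le_succ) ha₀ ha₁, ih₁ (hD₁.trans D.le_succ) ha₀ ha₁]
    have hright : (if x i then t₁ else t₀).simulateMean hε₀ hε₁ x
        (fun _ Q ↦ ∏ j ∈ Qᶜ, (1 - Function.update a i (r * a i) j)) ≤ B := by
      have hupdate₀ : ∀ j, 0 ≤ Function.update a i (r * a i) j :=
        (Function.forall_update_iff a fun _ y ↦ 0 ≤ y).2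
          ⟨mul_nonneg hr₀ (ha₀ i), fun j _ ↦ ha₀ j⟩
      have hupdate₁ : ∀ j, Function.update a i (r * a i) j ≤ 1 :=
        (Function.forall_update_iff a fun _ y ↦ y ≤ 1).2
          ⟨mul_le_one₀ hr₁ (ha₀ i) (ha₁ i), fun j _ ↦ ha₁ j⟩
      rw [hB, pow_succ, mul_assoc, ← prod_update_mul a i r]
      split_ifs
      exacts [ih₁ hD₁ hupdate₀ hupdate₁, ih₀ hD₀ hupdate₀ hupdate₁]
    rw [simulateMean_node, simulateMean_add_simulateMean_insert hε₀ hε₁ hr]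
    calc _ ≤ ε * B + (1 - ε) * B := by gcongr; linarith
      _ = B := by ring

lemma simulateMean_exp_neg_unread_le (T : NoisyTree n L) (x : Fin n → Bool) {t : ℝ}
    (ht : 0 ≤ t) :
    T.simulateMean hε₀ hε₁ x (fun _ Q ↦ Real.exp (-(t * (n - Q.card)))) ≤
      Real.exp (-((1 - Real.exp (-t)) * (n * (ε / (1 - ε)) ^ (T.depth / n : ℝ)))) := by
  set r := ε / (1 - ε)
  have hr : (1 - ε) * r = ε := mul_div_cancel₀ ε (by linarith)
  have hr₀ : 0 ≤ r := div_nonneg hε₀ (by linarith)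
  have hr₁ : r ≤ 1 := div_le_one_of_le₀ (by linarith) (by linarith)
  have hc₀ : 0 ≤ 1 - Real.exp (-t) := by simpa
  have hc₁ : 1 - Real.exp (-t) ≤ 1 := sub_le_self _ (Real.exp_nonneg _)
  have hunread (Q : Finset (Fin n)) :
      Real.exp (-(t * (n - Q.card))) = ∏ j ∈ Qᶜ, (1 - (1 - Real.exp (-t))) := by
    rw [Finset.prod_const, Finset.card_compl, Fintype.card_fin, sub_sub_cancel, ← Real.exp_nat_mul,
      Nat.cast_sub (card_finset_fin_le Q)]
    ring_nf
  have hrate : (n : ℝ) * (r ^ T.depth * ∏ _j : Fin n, (1 - Real.exp (-t))) ^ (n : ℝ)⁻¹ =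
      (1 - Real.exp (-t)) * (n * r ^ (T.depth / n : ℝ)) := by
    rcases eq_or_ne n 0 with rfl | hn
    · simp
    · rw [Finset.prod_const, Finset.card_univ, Fintype.card_fin,
        Real.mul_rpow (by positivity) (by positivity), Real.pow_rpow_inv_natCast hc₀ hn,
        ← Real.rpow_natCast, ← Real.rpow_mul hr₀, ← div_eq_mul_inv]
      ring
  simp only [hunread]
  rw [← hrate]
  exact simulateMean_prod_compl_le hε₀ hε₁ hr₀ hr₁ hr T x le_rfl (fun _ ↦ hc₀) fun _ ↦ hc₁

lemma one_sub_exp_le_simulateMean_card_queried_le (T : NoisyTree n L) (x : Fin n → Bool) (s : ℝ) :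
    1 - Real.exp (s - n * (ε / (1 - ε)) ^ (T.depth / n : ℝ) / 2) ≤
      T.simulateMean hε₀ hε₁ x fun _ Q ↦ if (Q.card : ℝ) ≤ n - s then 1 else 0 := by
  set m := n * (ε / (1 - ε)) ^ (T.depth / n : ℝ)
  have hm : 0 ≤ m := by
    have : 0 ≤ ε / (1 - ε) := div_nonneg hε₀ (by linarith)
    positivity
  have hexp : Real.exp (-1) ≤ 1 / 2 := by
    rw [Real.exp_neg, one_div]
    exact inv_anti₀ two_pos Real.exp_one_gt_two.le
  have hlaplace := simulateMean_exp_neg_unread_le hε₀ hε₁ T x zero_le_one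
  have hmarkov := one_sub_exp_mul_iConvexComb_le (T.simulate hε₀ hε₁)
    (fun d ↦ n - ((d.queried x).card : ℝ)) zero_le_one s
  simp only [le_sub_comm (a := s)] at hmarkov
  refine le_trans (sub_le_sub_left ?_ 1) hmarkov
  calc Real.exp (1 * s) * T.simulateMean hε₀ hε₁ x (fun _ Q ↦ Real.exp (-(1 * (n - Q.card))))
      ≤ Real.exp (1 * s) * Real.exp (-((1 - Real.exp (-1)) * m)) := by gcongr
    _ = Real.exp (s - (1 - Real.exp (-1)) * m) := by rw [← Real.exp_add]; ring_nf
    _ ≤ Real.exp (s - m / 2) := Real.exp_le_exp.2 (by nlinarith)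

end NoisyTree

lemma rpow_mul_le_mul_div_one_sub_rpow {ε κ : ℝ} {n D : ℕ} (hε₀ : 0 < ε) (hε₁ : ε < 1)
    (hκ : 0 ≤ κ) (hD : (D : ℝ) ≤ κ * n) :
    ε ^ κ * n ≤ n * (ε / (1 - ε)) ^ (D / n : ℝ) := by
  have hexponent : (D / n : ℝ) ≤ κ := div_le_of_le_mul₀ n.cast_nonneg hκ hD
  have hbase : ε ≤ ε / (1 - ε) := le_div_self hε₀.le (by linarith) (by linarith)
  calc ε ^ κ * n ≤ ε ^ (D / n : ℝ) * n := by
        gcongr ?_ * _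
        exact Real.rpow_le_rpow_of_exponent_ge hε₀ hε₁.le hexponent
    _ = n * ε ^ (D / n : ℝ) := mul_comm _ _
    _ ≤ n * (ε / (1 - ε)) ^ (D / n : ℝ) := by gcongr

theorem noisy_tree_to_sampling_general {n : ℕ} {L : Type} [DecidableEq L] {ε : ℝ} (hε₀ : 0 ≤ ε)
    (hε₁ : ε ≤ 1 / 2) (T : NoisyTree n L) :
    ∃ (m : ℕ) (trees : Fin m → DetTree n L) (w : Fin m → ℝ),
      (∀ j, 0 ≤ w j) ∧ (∑ j, w j = 1) ∧
      (∀ (x : Fin n → Bool) (l : L),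
        ∑ j, w j * (if (trees j).eval x = l then (1 : ℝ) else 0) = T.leafDist ε x l) ∧
      (∀ (x : Fin n → Bool) (s : ℝ),
        1 - Real.exp (s - n * (ε / (1 - ε)) ^ (T.depth / n : ℝ) / 2) ≤
          ∑ j with (((trees j).queried x).card : ℝ) ≤ n - s, w j) := by
  obtain ⟨m, trees, w, hw, hsum, hmean⟩ := exists_fin_sum_eq_iConvexComb (T.simulate hε₀ hε₁)
  refine ⟨m, trees, w, hw, hsum, fun x l ↦ ?_, fun x s ↦ ?_⟩
  · rw [hmean fun d ↦ if d.eval x = l then 1 else 0]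
    exact T.simulateMean_ite_eq_leafDist hε₀ hε₁ x l
  · have hread := hmean fun d ↦ if ((d.queried x).card : ℝ) ≤ n - s then 1 else 0
    simp only [mul_ite, mul_one, mul_zero, ← Finset.sum_filter] at hread
    rw [hread]
    exact T.one_sub_exp_le_simulateMean_card_queried_le hε₀ hε₁ x s

/-- Simulation of an `ε`-noisy decision tree of depth at most `k·n` by a randomized
query algorithm (a finitely supported distribution `(w, trees)` over deterministic
decision trees whose leaves are labeled by leaves of `T`):
(i) for every input `x`, the distribution of the leaf of `T` reached equals the leaf
distribution of the `ε`-noisy computation of `T` on `x`; and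
(ii) for every input `x`, with probability at least `1 - exp(-ε^(2k) n / 16)` the
computation queries at most `n - ε^(2k) n / 4` distinct variables, i.e. leaves at
least `ε^(2k) n / 4` variables unread. -/
theorem noisy_tree_to_sampling {n : ℕ} {L : Type} [DecidableEq L]
    (ε k : ℝ) (hε0 : 0 < ε) (hε1 : ε < 1 / 2) (hk : 0 ≤ k)
    (T : NoisyTree n L) (hdepth : (T.depth : ℝ) ≤ k * n) :
    ∃ (m : ℕ) (trees : Fin m → DetTree n L) (w : Fin m → ℝ),
      (∀ j, 0 ≤ w j) ∧ (∑ j, w j = 1) ∧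
      (∀ (x : Fin n → Bool) (l : L),
        ∑ j, w j * (if (trees j).eval x = l then (1 : ℝ) else 0) = T.leafDist ε x l) ∧
      (∀ x : Fin n → Bool,
        1 - Real.exp (-(ε ^ (2 * k) * n / 16)) ≤
          ∑ j ∈ Finset.univ.filter
              (fun j => (((trees j).queried x).card : ℝ) ≤ n - ε ^ (2 * k) * n / 4),
            w j) := by
  obtain ⟨m, trees, w, hw, hsum, hleaf, hread⟩ :=
    noisy_tree_to_sampling_general hε0.le hε1.le T
  refine ⟨m, trees, w, hw, hsum, hleaf, fun x ↦ le_trans ?_ (hread x _)⟩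
  have hdepth' : (T.depth : ℝ) ≤ 2 * k * n := hdepth.trans (by gcongr; linarith)
  have hrate := rpow_mul_le_mul_div_one_sub_rpow hε0 (by linarith) (by positivity) hdepth'
  have hpos : 0 ≤ ε ^ (2 * k) * n := by positivity
  exact sub_le_sub_left (Real.exp_le_exp.2 (by linarith)) 1
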